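/- arXiv:2108.00736 — 2 statements merged into one kernel-verified Lean document; each statement's English description precedes it below -/
import Mathlib

section
/- Positive-measure pieces of orbits span everything: for every ℓ with 2ℓ ∈ ℕ, every nonzero v ∈ ℂ^{2ℓ+1}, and every Borel measurable subset A ⊆ SU(2) with μ(A) > 0, the complex linear span of {D^ℓ(g) v : g ∈ A} is all of ℂ^{2ℓ+1}. -/
open scoped ComplexConjugate Matrix
open MeasureTheory Complex

noncomputable section

/-- `SU(2)` realized as the subgroup of the `2 × 2` complex unitary group consisting of the
matrices of determinant one; its elements are exactly the matrices
`h(α,β) = !![α, -conj β; β, conj α]` with `|α|² + |β|² = 1`. -/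
def SU2 : Subgroup (Matrix.unitaryGroup (Fin 2) ℂ) where
  carrier := {A | (A : Matrix (Fin 2) (Fin 2) ℂ).det = 1}
  mul_mem' := by
    intro A B hA hB
    simp only [Set.mem_setOf_eq] at *
    simp [Matrix.UnitaryGroup.mul_val, Matrix.det_mul, hA, hB]
  one_mem' := by simp [Set.mem_setOf_eq]
  inv_mem' := by
    intro A hA
    simp only [Set.mem_setOf_eq] at *
    simp [Matrix.UnitaryGroup.inv_val, Matrix.star_eq_conjTranspose, Matrix.det_conjTranspose, hA]

instance : MeasurableSpace SU2 := borel SU2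
instance : BorelSpace SU2 := ⟨rfl⟩

/-- The matrix `h(α,β)`. -/
def h (a b : ℂ) : Matrix (Fin 2) (Fin 2) ℂ := !![a, -conj b; b, conj a]

/-- The entry `α` of an element `g = h(α,β)` of `SU(2)`. -/
def ga (g : SU2) : ℂ := g.1.1 0 0

/-- The entry `β` of an element `g = h(α,β)` of `SU(2)`. -/
def gb (g : SU2) : ℂ := g.1.1 1 0

/-- `IsWigner n D` states that `D` is the family of Wigner functions `D^ℓ_{m,s}` for `ℓ = n/2`,
where the row index `j` corresponds to `m = j - ℓ` and the column index `k` to `s = k - ℓ`: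
for every `g = h(α,β) ∈ SU(2)` and all `z₀ z₁ : ℂ`,
`∑ⱼ √(binom n j) z₀^j z₁^(n-j) D j k g = √(binom n k) (conj α z₀ + conj β z₁)^k (-β z₀ + α z₁)^(n-k)`. -/
def IsWigner (n : ℕ) (D : Fin (n + 1) → Fin (n + 1) → SU2 → ℂ) : Prop :=
  ∀ (g : SU2) (k : Fin (n + 1)) (z₀ z₁ : ℂ),
    ∑ j : Fin (n + 1),
        (Real.sqrt (n.choose (j : ℕ)) : ℂ) * z₀ ^ (j : ℕ) * z₁ ^ (n - (j : ℕ)) * D j k g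
      = (Real.sqrt (n.choose (k : ℕ)) : ℂ) * (conj (ga g) * z₀ + conj (gb g) * z₁) ^ (k : ℕ)
          * (-(gb g) * z₀ + ga g * z₁) ^ (n - (k : ℕ))

/-- The action of the Wigner matrix `D^ℓ(g)` on a vector `v ∈ ℂ^{2ℓ+1}`. -/
def DVec {n : ℕ} (D : Fin (n + 1) → Fin (n + 1) → SU2 → ℂ) (g : SU2)
    (v : Fin (n + 1) → ℂ) : Fin (n + 1) → ℂ :=
  fun j => ∑ k, D j k g * v k

/-- The Hermitian inner product `⟨v,w⟩ = ∑ₖ conj (v k) * (w k)` on `ℂ^N`. -/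
def herm {N : ℕ} (v w : Fin N → ℂ) : ℂ := ∑ r, conj (v r) * w r

/-! Let `W` be minimal among the subspaces of the span for which `{x | D(x) v ∈ W}` has positive
measure. Poincaré recurrence for left translation by `g` gives some `m > 0` for which
`{x | D(x) v ∈ W ∧ D(g ^ m x) v ∈ W}` has positive measure, and minimality of `W` forces
`D(g ^ m) W ⊆ W`. So `W` is stable under a positive power of every element of `SU(2)`. All positive
powers of a torus element of infinite order act with distinct weights, hence `W` contains a weight
vector. Some positive power of the rotation by one radian also preserves `W`; it moves that vector
to one with a nonzero highest weight component, and the highest weight vector to one with all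
components nonzero. -/

section Recurrence

variable {k G V : Type*} [CommSemiring k] [Monoid G] [AddCommMonoid V] [Module k V]
  [IsArtinian k V] [MeasurableSpace G] [MeasurableMul G]

theorem exists_submodule_forall_exists_pow_mem_invtSubmodule (μ : Measure G) [IsFiniteMeasure μ]
    [μ.IsMulLeftInvariant] (ρ : Representation k G V) {v : V}
    (hρ : ∀ W : Submodule k V, NullMeasurableSet {g | ρ g v ∈ W} μ) {U : Submodule k V}
    (hU : μ {g | ρ g v ∈ U} ≠ 0) :
    ∃ W ≤ U, (∃ g, ρ g v ∈ W) ∧ ∀ g, ∃ m > 0, W ∈ Module.End.invtSubmodule (ρ (g ^ m)) := by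
  obtain ⟨W, hWU, hW, hmin⟩ := exists_minimal_le_of_wellFoundedLT
    (fun W : Submodule k V ↦ μ {g | ρ g v ∈ W} ≠ 0) U hU
  refine ⟨W, hWU, nonempty_of_measure_ne_zero hW, fun g ↦ ?_⟩
  obtain ⟨m, hm, hrec⟩ :=
    (measurePreserving_mul_left μ g).conservative.exists_gt_measure_inter_ne_zero (hρ W) hW 0
  have hinter : {x | ρ x v ∈ W} ∩ (g * ·)^[m] ⁻¹' {x | ρ x v ∈ W}
      = {x | ρ x v ∈ W ⊓ W.comap (ρ (g ^ m))} := by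
    ext x
    simp [mul_left_iterate]
  rw [hinter] at hrec
  exact ⟨m, hm, (hmin hrec inf_le_left).trans inf_le_right⟩

end Recurrence

section Diagonal

variable {ι K : Type*} [Finite ι] [DecidableEq ι] [Field K]

lemma pi_single_one_mem_of_forall_mul_mem {d : ι → K} (hd : Function.Injective d)
    {W : Submodule K (ι → K)} (hW : ∀ w ∈ W, d * w ∈ W) {w : ι → K} (hw : w ∈ W) {k : ι}
    (hk : w k ≠ 0) : Pi.single k 1 ∈ W := by
  have := Fintype.ofFinite ι
  have hpoly (p : Polynomial K) : Polynomial.aeval d p * w ∈ W := by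
    induction p using Polynomial.induction_on' with
    | add p q hp hq => simpa [add_mul] using W.add_mem hp hq
    | monomial m a =>
      induction m with
      | zero => simpa [Algebra.algebraMap_eq_smul_one] using W.smul_mem a hw
      | succ m ih => simpa [pow_succ', mul_assoc, mul_left_comm] using hW _ ih
  have hproj : Polynomial.aeval d (Lagrange.basis Finset.univ d k) * w = w k • Pi.single k 1 := by
    ext i
    rcases eq_or_ne i k with rfl | hik
    · simp [Lagrange.eval_basis_self hd.injOn]
    · simp [Lagrange.eval_basis_of_ne hik.symm, hik]
  exact (W.smul_mem_iff hk).mp (hproj ▸ hpoly _)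

end Diagonal

lemma circle_sq_eq_one_of_im_eq_zero {z : Circle} (hz : (z : ℂ).im = 0) : z ^ 2 = 1 := by
  have hnorm := z.normSq_coe
  rw [normSq_apply, hz, mul_zero, add_zero] at hnorm
  ext
  apply Complex.ext <;> simp [sq, hz, hnorm]

lemma circle_re_mul_im_ne_zero {z : Circle} (hz : ¬IsOfFinOrder z) :
    (z : ℂ).re * (z : ℂ).im ≠ 0 := by
  intro h0
  have hsq : ((z ^ 2 : Circle) : ℂ).im = 0 := by
    rw [Circle.coe_pow, sq, mul_im]
    linear_combination 2 * h0
  refine hz (isOfFinOrder_iff_pow_eq_one.mpr ⟨2 * 2, by norm_num, ?_⟩)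
  rw [pow_mul, circle_sq_eq_one_of_im_eq_zero hsq]

lemma not_isOfFinOrder_circle_exp_one : ¬IsOfFinOrder (Circle.exp 1) := by
  rw [isOfFinOrder_iff_pow_eq_one]
  rintro ⟨n, hn, h1⟩
  rw [← Circle.exp_natCast_mul, mul_one, Circle.exp_eq_one] at h1
  obtain ⟨k, hk⟩ := h1
  have hk0 : k ≠ 0 := by
    rintro rfl
    simp [hn.ne'] at hk
  apply n.not_irrational
  rw [hk, mul_left_comm]
  exact_mod_cast (irrational_pi.intCast_mul hk0).natCast_mul two_ne_zero

lemma h_mul (a b c d : ℂ) : h a b * h c d = h (a * c - conj b * d) (b * c + conj a * d) := by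
  ext i j
  fin_cases i <;> fin_cases j <;> simp [h] <;> ring

lemma h_one : h 1 0 = 1 := by
  simp [h, Matrix.one_fin_two]

lemma h_conjTranspose (a b : ℂ) : (h a b)ᴴ = h (conj a) (-b) := by
  ext i j
  fin_cases i <;> fin_cases j <;> simp [h]

lemma SU2_val_eq_h (g : SU2) : g.1.1 = h (ga g) (gb g) := by
  have hstar : star g.1.1 = g.1.1.adjugate :=
    left_inv_eq_right_inv (Matrix.mem_unitaryGroup_iff'.mp g.1.2)
      (by rw [Matrix.mul_adjugate, show g.1.1.det = 1 from g.2, one_smul])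
  rw [Matrix.adjugate_fin_two, Matrix.star_eq_conjTranspose] at hstar
  have h01 : conj (g.1.1 1 0) = -g.1.1 0 1 := congr_fun₂ hstar 0 1
  have h11 : conj (g.1.1 0 0) = g.1.1 1 1 := congr_fun₂ hstar 0 0
  ext i j
  fin_cases i <;> fin_cases j <;> simp [h, ga, gb, h01, h11]

lemma SU2_conjTranspose_mulVec (g : SU2) (u : Fin 2 → ℂ) :
    g.1.1ᴴ *ᵥ u = ![conj (ga g) * u 0 + conj (gb g) * u 1, -gb g * u 0 + ga g * u 1] := by
  rw [SU2_val_eq_h]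
  ext i
  fin_cases i <;> simp [h, Matrix.mulVec, dotProduct]

/-- The matrix `h(α,β)` as an element of `SU(2)`, used to write down one-parameter subgroups. -/
def su2OfPair (a b : ℂ) (hab : normSq a + normSq b = 1) : SU2 :=
  have hab' : a * conj a + conj b * b = 1 := by
    rw [mul_conj, ← normSq_eq_conj_mul_self]
    exact_mod_cast hab
  ⟨⟨h a b, by
    rw [Matrix.mem_unitaryGroup_iff, Matrix.star_eq_conjTranspose, h_conjTranspose, h_mul, ← h_one]
    congr 1
    · linear_combination hab'
    · ring⟩,
    show (h a b).det = 1 by simpa [h, Matrix.det_fin_two] using hab'⟩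

/-- The diagonal maximal torus of `SU(2)`, parametrized by `α`. -/
def torus : Circle →* SU2 where
  toFun z := su2OfPair z 0 (by simp)
  map_one' := Subtype.ext (Subtype.ext (by simp [su2OfPair, h_one]))
  map_mul' z w := Subtype.ext (Subtype.ext (by simp [su2OfPair, h_mul]))

lemma ga_torus (z : Circle) : ga (torus z) = z := rfl

lemma gb_torus (z : Circle) : gb (torus z) = 0 := rfl

/-- The subgroup `SO(2)` of real rotation matrices, with the rotation by `θ` attached to
`exp (iθ)`. -/
def realRotation : Circle →* SU2 where
  toFun z := su2OfPair (z : ℂ).re (z : ℂ).im (by simp [← normSq_apply])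
  map_one' := Subtype.ext (Subtype.ext (by simp [su2OfPair, h_one]))
  map_mul' z w := Subtype.ext (Subtype.ext (by simp [su2OfPair, h_mul, add_comm]))

lemma ga_realRotation (z : Circle) : ga (realRotation z) = (z : ℂ).re := rfl

lemma gb_realRotation (z : Circle) : gb (realRotation z) = (z : ℂ).im := rfl

section BinaryForm

lemma ofReal_sqrt_choose_ne_zero {n k : ℕ} (hk : k ≤ n) : (√(n.choose k) : ℂ) ≠ 0 := by
  have := Nat.choose_pos hk
  simp [this.ne']

/-- The binary form of degree `n` whose coefficients in the basis
`√(binom n j) u₀ ^ j u₁ ^ (n - j)` are the coordinates of `w`. Through it `D^ℓ(g)` becomes the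
substitution `u ↦ gᴴ u`. -/
def binaryForm (n : ℕ) : (Fin (n + 1) → ℂ) →ₗ[ℂ] (Fin 2 → ℂ) → ℂ where
  toFun w u := ∑ j : Fin (n + 1), (√(n.choose j) : ℂ) * u 0 ^ (j : ℕ) * u 1 ^ (n - j) * w j
  map_add' w w' := by
    ext u
    simp [mul_add, Finset.sum_add_distrib]
  map_smul' c w := by
    ext u
    simp [Finset.mul_sum, mul_left_comm]

variable {n : ℕ}

lemma binaryForm_apply (w : Fin (n + 1) → ℂ) (u : Fin 2 → ℂ) : binaryForm n w u =
    ∑ j : Fin (n + 1), (√(n.choose j) : ℂ) * u 0 ^ (j : ℕ) * u 1 ^ (n - j) * w j := rfl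

lemma binaryForm_injective : Function.Injective (binaryForm n) := by
  rw [← LinearMap.ker_eq_bot, LinearMap.ker_eq_bot']
  intro w hw
  have hzero := Matrix.eq_zero_of_forall_index_sum_pow_mul_eq_zero
    (f := fun j : Fin (n + 1) ↦ ((j : ℕ) : ℂ)) (v := fun j ↦ (√(n.choose j) : ℂ) * w j)
    (Nat.cast_injective.comp Fin.val_injective) fun i ↦ by
      simpa [binaryForm_apply, mul_assoc, mul_left_comm] using congr_fun hw ![(i : ℕ), 1]
  ext j
  exact (mul_eq_zero.mp (congr_fun hzero j)).resolve_left (ofReal_sqrt_choose_ne_zero j.is_le)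

lemma continuous_binaryForm (w : Fin (n + 1) → ℂ) : Continuous (binaryForm n w) := by
  simp only [funext (binaryForm_apply w)]
  fun_prop

lemma binaryForm_one_zero (w : Fin (n + 1) → ℂ) : binaryForm n w ![1, 0] = w (Fin.last n) := by
  have hlt (j : Fin n) : n - (j : ℕ) ≠ 0 := Nat.sub_ne_zero_of_lt j.2
  simp [binaryForm_apply, Fin.sum_univ_castSucc, hlt]

lemma binaryForm_sqrt_choose_mul_pow (a b : ℂ) (u : Fin 2 → ℂ) :
    binaryForm n (fun j ↦ (√(n.choose j) : ℂ) * a ^ (j : ℕ) * b ^ (n - j)) u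
      = (a * u 0 + b * u 1) ^ n := by
  rw [binaryForm_apply, add_pow, ← Fin.sum_univ_eq_sum_range
    (fun j ↦ (a * u 0) ^ j * (b * u 1) ^ (n - j) * (n.choose j : ℂ))]
  refine Finset.sum_congr rfl fun j _ ↦ ?_
  have hsqrt : (√(n.choose j) : ℂ) ^ 2 = n.choose j := by
    exact_mod_cast Real.sq_sqrt (Nat.cast_nonneg _)
  rw [← hsqrt]
  ring

end BinaryForm

namespace IsWigner

variable {n : ℕ} {D : Fin (n + 1) → Fin (n + 1) → SU2 → ℂ} (hD : IsWigner n D)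

include hD

lemma binaryForm_col (g : SU2) (k : Fin (n + 1)) (u : Fin 2 → ℂ) :
    binaryForm n (fun j ↦ D j k g) u = (√(n.choose k) : ℂ) *
      (conj (ga g) * u 0 + conj (gb g) * u 1) ^ (k : ℕ) * (-gb g * u 0 + ga g * u 1) ^ (n - k) :=
  hD g k (u 0) (u 1)

lemma binaryForm_DVec (g : SU2) (w : Fin (n + 1) → ℂ) (u : Fin 2 → ℂ) :
    binaryForm n (DVec D g w) u = binaryForm n w (g.1.1ᴴ *ᵥ u) := by
  have hcol : DVec D g w = ∑ k, w k • fun j ↦ D j k g := by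
    ext j
    simp [DVec, mul_comm]
  rw [hcol, map_sum, Finset.sum_apply, binaryForm_apply, SU2_conjTranspose_mulVec]
  refine Finset.sum_congr rfl fun k _ ↦ ?_
  rw [map_smul, Pi.smul_apply, hD.binaryForm_col, smul_eq_mul, mul_comm]
  rfl

lemma DVec_one (w : Fin (n + 1) → ℂ) : DVec D 1 w = w :=
  binaryForm_injective <| funext fun u ↦ by simp [hD.binaryForm_DVec]

lemma DVec_mul (g g' : SU2) (w : Fin (n + 1) → ℂ) :
    DVec D (g * g') w = DVec D g (DVec D g' w) :=
  binaryForm_injective <| funext fun u ↦ by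
    simp only [hD.binaryForm_DVec, Matrix.mulVec_mulVec, ← Matrix.conjTranspose_mul]
    rfl

lemma continuous_DVec (w : Fin (n + 1) → ℂ) : Continuous fun g ↦ DVec D g w := by
  rw [(LinearMap.isClosedEmbedding_of_injective
    (LinearMap.ker_eq_bot.mpr binaryForm_injective)).continuous_iff, continuous_pi_iff]
  intro u
  simp only [Function.comp_apply, hD.binaryForm_DVec]
  refine (continuous_binaryForm w).comp ?_
  fun_prop

/-- The representation `g ↦ D^ℓ(g)` of `SU(2)` on `ℂ^{2ℓ+1}`. -/
def rep : Representation ℂ SU2 (Fin (n + 1) → ℂ) where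
  toFun g := Matrix.mulVecLin (Matrix.of fun j k ↦ D j k g)
  map_one' := LinearMap.ext hD.DVec_one
  map_mul' g g' := LinearMap.ext (hD.DVec_mul g g')

lemma rep_apply (g : SU2) (w : Fin (n + 1) → ℂ) : hD.rep g w = DVec D g w := rfl

lemma rep_single_one_apply (g : SU2) (j k : Fin (n + 1)) :
    hD.rep g (Pi.single k 1) j = D j k g := by
  simp [rep_apply, DVec, Pi.single_apply]

lemma measurableSet_rep_apply_mem (v : Fin (n + 1) → ℂ) (W : Submodule ℂ (Fin (n + 1) → ℂ)) :
    MeasurableSet {g | hD.rep g v ∈ W} :=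
  (W.closed_of_finiteDimensional.preimage (hD.continuous_DVec v)).measurableSet

lemma apply_last_left (g : SU2) (k : Fin (n + 1)) :
    D (Fin.last n) k g = (√(n.choose k) : ℂ) * conj (ga g) ^ (k : ℕ) * (-gb g) ^ (n - k) := by
  rw [← binaryForm_one_zero fun j ↦ D j k g, hD.binaryForm_col]
  simp

lemma apply_last_right (g : SU2) (j : Fin (n + 1)) :
    D j (Fin.last n) g = (√(n.choose j) : ℂ) * conj (ga g) ^ (j : ℕ) * conj (gb g) ^ (n - j) := by
  suffices (fun j ↦ D j (Fin.last n) g) =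
      fun j : Fin (n + 1) ↦ (√(n.choose j) : ℂ) * conj (ga g) ^ (j : ℕ) * conj (gb g) ^ (n - j) from
    congr_fun this j
  refine binaryForm_injective (funext fun u ↦ ?_)
  rw [hD.binaryForm_col, binaryForm_sqrt_choose_mul_pow]
  simp

lemma rep_torus_apply (z : Circle) (w : Fin (n + 1) → ℂ) :
    hD.rep (torus z) w = (fun k : Fin (n + 1) ↦ ((z ^ (n - 2 * k : ℤ) : Circle) : ℂ)) * w := by
  refine binaryForm_injective (funext fun u ↦ ?_)
  rw [rep_apply, hD.binaryForm_DVec, SU2_conjTranspose_mulVec, binaryForm_apply, binaryForm_apply]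
  refine Finset.sum_congr rfl fun k _ ↦ ?_
  have hweight : z ^ (n - 2 * k : ℤ) = z⁻¹ ^ (k : ℕ) * z ^ (n - k) := by
    rw [inv_pow, ← zpow_natCast, ← zpow_natCast, ← zpow_neg, ← zpow_add, Nat.cast_sub k.is_le]
    congr 1
    ring
  rw [Pi.mul_apply, hweight]
  simp [ga_torus, gb_torus, mul_pow, ← Circle.coe_inv_eq_conj]
  ring

lemma single_one_mem_of_torus {z : Circle} (hz : ¬IsOfFinOrder z)
    {W : Submodule ℂ (Fin (n + 1) → ℂ)} (hW : W ∈ Module.End.invtSubmodule (hD.rep (torus z)))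
    {w : Fin (n + 1) → ℂ} (hw : w ∈ W) {k : Fin (n + 1)} (hk : w k ≠ 0) : Pi.single k 1 ∈ W := by
  refine pi_single_one_mem_of_forall_mul_mem
    (d := fun k : Fin (n + 1) ↦ ((z ^ (n - 2 * k : ℤ) : Circle) : ℂ))
    (fun i j hij ↦ ?_) (fun w hw ↦ hD.rep_torus_apply z w ▸ hW hw) hw hk
  have := injective_zpow_iff_not_isOfFinOrder.mpr hz (Circle.coe_injective hij)
  omega

theorem eq_top_of_mem_invtSubmodule {z : Circle} (hz : ¬IsOfFinOrder z) {g : SU2}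
    (ha : ga g ≠ 0) (hb : gb g ≠ 0) {W : Submodule ℂ (Fin (n + 1) → ℂ)} (hW : W ≠ ⊥)
    (hWz : W ∈ Module.End.invtSubmodule (hD.rep (torus z)))
    (hWg : W ∈ Module.End.invtSubmodule (hD.rep g)) : W = ⊤ := by
  have move {j k : Fin (n + 1)} (hk : Pi.single k 1 ∈ W) (hjk : D j k g ≠ 0) :
      Pi.single j 1 ∈ W :=
    hD.single_one_mem_of_torus hz hWz (hWg hk) (by rwa [rep_single_one_apply])
  obtain ⟨w, hw, hw0⟩ := W.ne_bot_iff.mp hW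
  obtain ⟨k, hk⟩ := Function.ne_iff.mp hw0
  have hlast : Pi.single (Fin.last n) 1 ∈ W := by
    refine move (hD.single_one_mem_of_torus hz hWz hw hk) ?_
    simp [hD.apply_last_left, ofReal_sqrt_choose_ne_zero k.is_le, ha, hb]
  have hall (j : Fin (n + 1)) : Pi.single j 1 ∈ W := by
    refine move hlast ?_
    simp [hD.apply_last_right, ofReal_sqrt_choose_ne_zero j.is_le, ha, hb]
  rw [eq_top_iff, ← (Pi.basisFun ℂ (Fin (n + 1))).span_eq, Submodule.span_le]
  rintro _ ⟨j, rfl⟩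
  simpa using hall j

end IsWigner

theorem wigner_orbit_piece_spans_general (μ : Measure SU2) [IsFiniteMeasure μ]
    [μ.IsMulLeftInvariant] {n : ℕ} {D : Fin (n + 1) → Fin (n + 1) → SU2 → ℂ} (hD : IsWigner n D)
    {v : Fin (n + 1) → ℂ} (hv : v ≠ 0) {A : Set SU2} (hA : μ A ≠ 0) :
    Submodule.span ℂ {w : Fin (n + 1) → ℂ | ∃ g ∈ A, w = DVec D g v} = ⊤ := by
  set U := Submodule.span ℂ {w : Fin (n + 1) → ℂ | ∃ g ∈ A, w = DVec D g v}
  have hU : μ {g | hD.rep g v ∈ U} ≠ 0 :=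
    fun h0 ↦ hA (measure_mono_null (fun g hg ↦ show hD.rep g v ∈ U from
      Submodule.subset_span ⟨g, hg, rfl⟩) h0)
  obtain ⟨W, hWU, ⟨g, hgW⟩, hrec⟩ := exists_submodule_forall_exists_pow_mem_invtSubmodule μ hD.rep
    (fun W ↦ (hD.measurableSet_rep_apply_mem v W).nullMeasurableSet) hU
  have hW : W ≠ ⊥ :=
    W.ne_bot_iff.mpr ⟨_, hgW, (map_ne_zero_iff _ (hD.rep.apply_bijective g).injective).mpr hv⟩
  have hpow {m : ℕ} (hm : 0 < m) : ¬IsOfFinOrder (Circle.exp 1 ^ m) := by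
    simp [isOfFinOrder_pow, not_isOfFinOrder_circle_exp_one, hm.ne']
  obtain ⟨m, hm, hT⟩ := hrec (torus (Circle.exp 1))
  obtain ⟨m', hm', hR⟩ := hrec (realRotation (Circle.exp 1))
  rw [← map_pow] at hT hR
  obtain ⟨hre, him⟩ := mul_ne_zero_iff.mp (circle_re_mul_im_ne_zero (hpow hm'))
  have htop : W = ⊤ := hD.eq_top_of_mem_invtSubmodule (hpow hm)
    (by rwa [ga_realRotation, ofReal_ne_zero]) (by rwa [gb_realRotation, ofReal_ne_zero]) hW hT hR
  exact top_le_iff.mp (htop ▸ hWU)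

/-- positive-measure pieces of orbits span everything: if `μ A > 0` then
`span {D^ℓ(g) v : g ∈ A} = ℂ^{2ℓ+1}` for every nonzero `v`. -/
theorem wigner_orbit_piece_spans (μ : Measure SU2) [μ.IsHaarMeasure] [IsProbabilityMeasure μ]
    (n : ℕ) (D : Fin (n + 1) → Fin (n + 1) → SU2 → ℂ) (hD : IsWigner n D)
    (v : Fin (n + 1) → ℂ) (hv : v ≠ 0)
    (A : Set SU2) (hA : MeasurableSet A) (hApos : 0 < μ A) :
    Submodule.span ℂ {w : Fin (n + 1) → ℂ | ∃ g ∈ A, w = DVec D g v} = ⊤ :=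
  wigner_orbit_piece_spans_general μ hD hv hApos.ne'
end
end

section
/- Stabilizer of a canonical basis vector with nonzero index: for every ℓ with 2ℓ ∈ ℕ and every admissible s ∈ {−ℓ,…,ℓ} with s ≠ 0, the isotropy subgroup {g ∈ SU(2) : D^ℓ(g) e_s = e_s} equals the set of diagonal matrices {h(α, 0) : α ∈ ℂ, α^{2|s|} = 1}; in particular it is a cyclic group of order 2|s|. -/
open scoped ComplexConjugate Matrix
open MeasureTheory Complex

noncomputable section

/-!
The `k`-th column of `D(g)` consists of the coefficients, in the basis `√(binom n j) z₀^j z₁^(n-j)`,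
of `√(binom n k) z₀^k z₁^(n-k)` after the linear substitution by `g`. Hence `g` fixes `e_k` iff
this substitution fixes the monomial `z₀^k z₁^(n-k)`. Since `k ≠ n - k`, it cannot be antidiagonal,
as it would then exchange the two exponents, so it is diagonal; and the substitution of `h(α,0)`
multiplies the monomial by `conj α ^ k * α ^ (n-k) = α ^ (n-2k)`.
-/

theorem eq_of_forall_sum_mul_pow_eq {R : Type*} [CommRing R] [IsDomain R] [Infinite R] {N : ℕ}
    {c d : Fin N → R} (hcd : ∀ x : R, ∑ i, c i * x ^ (i : ℕ) = ∑ i, d i * x ^ (i : ℕ)) : c = d := by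
  let nodes : Fin N ↪ R := Fin.valEmbedding.trans (Infinite.natEmbedding R)
  refine sub_eq_zero.mp (Matrix.eq_zero_of_forall_index_sum_mul_pow_eq_zero nodes.injective ?_)
  intro i
  simp only [Pi.sub_apply, sub_mul, Finset.sum_sub_distrib, hcd, sub_self]

theorem eq_zero_or_eq_zero_of_forall_pow_mul_pow_eq {R : Type*} [CommRing R] [IsDomain R]
    [CharZero R] {k m : ℕ} (hkm : k ≠ m) {p q r t : R}
    (hfix : ∀ x y : R, (p * x + q * y) ^ k * (r * x + t * y) ^ m = x ^ k * y ^ m) :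
    q = 0 ∨ r = 0 := by
  -- If `q` and `r` are nonzero then `p = t = 0`, so the substitution exchanges the two exponents.
  by_contra! ⟨hq, hr⟩
  have at_one_zero : p ^ k * r ^ m = 0 ^ m := by simpa using hfix 1 0
  have at_zero_one : q ^ k * t ^ m = 0 ^ k := by simpa using hfix 0 1
  have hp : m ≠ 0 → p = 0 ∧ k ≠ 0 := fun hm ↦ by simpa [hm, hr] using at_one_zero
  have ht : k ≠ 0 → t = 0 ∧ m ≠ 0 := fun hk ↦ by simpa [hk, hq] using at_zero_one
  obtain ⟨rfl, rfl⟩ : p = 0 ∧ t = 0 := by grind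
  have at_one_one : q ^ k * r ^ m = 1 := by simpa using hfix 1 1
  have two_pow_eq : (2 : R) ^ m = 2 ^ k := by
    calc (2 : R) ^ m = q ^ k * r ^ m * 2 ^ m := by rw [at_one_one, one_mul]
      _ = 2 ^ k := by simpa [mul_pow, mul_assoc] using hfix 2 1
  exact hkm (Nat.pow_right_injective le_rfl (by exact_mod_cast two_pow_eq)).symm

theorem inv_pow_mul_pow_eq_one_iff {G₀ : Type*} [GroupWithZero G₀] {a : G₀} (ha : a ≠ 0)
    (k m : ℕ) : a⁻¹ ^ k * a ^ m = 1 ↔ a ^ ((k : ℤ) - m).natAbs = 1 := by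
  lift a to G₀ˣ using ha.isUnit
  simp only [← Units.val_inv_eq_inv_val, ← Units.val_pow_eq_pow_val, ← Units.val_mul,
    Units.val_eq_one]
  rw [pow_natAbs_eq_one, zpow_sub, zpow_natCast, zpow_natCast, mul_inv_eq_one, inv_pow,
    inv_mul_eq_one]

theorem sqrt_choose_ne_zero {n k : ℕ} (hk : k ≤ n) : (Real.sqrt (n.choose k) : ℂ) ≠ 0 := by
  have choose_pos : (0 : ℝ) < n.choose k := by exact_mod_cast Nat.choose_pos hk
  exact_mod_cast (Real.sqrt_pos.mpr choose_pos).ne'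

namespace SU2

theorem coe_eq_h (g : SU2) : g.1.1 = h (ga g) (gb g) := by
  have star_eq_adjugate : star g.1.1 = g.1.1.adjugate := by
    refine left_inv_eq_right_inv (Matrix.UnitaryGroup.star_mul_self g.1) ?_
    rw [Matrix.mul_adjugate, show g.1.1.det = 1 from g.2, one_smul]
  rw [Matrix.adjugate_fin_two] at star_eq_adjugate
  have entry_one_one : conj (ga g) = g.1.1 1 1 := congrFun₂ star_eq_adjugate 0 0
  have entry_zero_one : conj (gb g) = -g.1.1 0 1 := congrFun₂ star_eq_adjugate 0 1
  rw [h, entry_one_one, entry_zero_one, neg_neg]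
  exact Matrix.eta_fin_two g.1.1

theorem normSq_add_normSq (g : SU2) : normSq (ga g) + normSq (gb g) = 1 := by
  have hdet : (h (ga g) (gb g)).det = 1 := coe_eq_h g ▸ g.2
  rw [h, Matrix.det_fin_two_of, neg_mul, sub_neg_eq_add, mul_conj, mul_comm, mul_conj] at hdet
  exact_mod_cast hdet

theorem exists_coe_eq_h {a b : ℂ} (hab : normSq a + normSq b = 1) : ∃ g : SU2, g.1.1 = h a b := by
  have hab' : a * conj a + b * conj b = 1 := by
    rw [mul_conj, mul_conj]
    exact_mod_cast hab
  have h_unitary : h a b ∈ Matrix.unitaryGroup (Fin 2) ℂ := by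
    rw [Matrix.mem_unitaryGroup_iff]
    ext i j
    fin_cases i <;> fin_cases j <;> simp [h, Matrix.mul_apply, Matrix.star_apply] <;> grind
  refine ⟨⟨⟨h a b, h_unitary⟩, ?_⟩, rfl⟩
  change (h a b).det = 1
  rw [h, Matrix.det_fin_two_of]
  linear_combination hab'

theorem exists_pow_eq_one_and_coe_eq_h_zero_iff {N : ℕ} {g : SU2} :
    (∃ a : ℂ, a ^ N = 1 ∧ g.1.1 = h a 0) ↔ gb g = 0 ∧ ga g ^ N = 1 := by
  constructor
  · rintro ⟨a, ha, hg⟩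
    simpa [ga, gb, hg, h] using ha
  · rintro ⟨hb, ha⟩
    exact ⟨ga g, ha, hb ▸ coe_eq_h g⟩

theorem card_diagonal_pow_eq_one {N : ℕ} (hN : N ≠ 0) :
    Nat.card {g : SU2 | ∃ a : ℂ, a ^ N = 1 ∧ g.1.1 = h a 0} = N := by
  have ga_bijOn : Set.BijOn ga {g : SU2 | ∃ a : ℂ, a ^ N = 1 ∧ g.1.1 = h a 0}
      (Polynomial.nthRootsFinset N (1 : ℂ)) := by
    simp only [exists_pow_eq_one_and_coe_eq_h_zero_iff]
    refine ⟨fun g hg ↦ ?_, fun g hg g' hg' hgg' ↦ ?_, fun a ha ↦ ?_⟩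
    · simpa [Polynomial.mem_nthRootsFinset hN.bot_lt] using hg.2
    · refine Subtype.ext (Subtype.ext ?_)
      rw [coe_eq_h, coe_eq_h g', hgg', hg.1, hg'.1]
    · have ha : a ^ N = 1 := by simpa [Polynomial.mem_nthRootsFinset hN.bot_lt] using ha
      have norm_a : ‖a‖ = 1 := norm_eq_one_of_pow_eq_one ha hN
      obtain ⟨g, hg⟩ : ∃ g : SU2, g.1.1 = h a 0 :=
        exists_coe_eq_h (by simp [normSq_eq_norm_sq, norm_a])
      exact ⟨g, exists_pow_eq_one_and_coe_eq_h_zero_iff.mp ⟨a, ha, hg⟩, by simp [ga, hg, h]⟩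
  rw [Nat.card_coe_set_eq, ga_bijOn.ncard_eq, Set.ncard_coe_finset,
    (isPrimitiveRoot_exp N hN).card_nthRootsFinset]

theorem forall_pow_mul_pow_eq_iff {k m : ℕ} (hkm : k ≠ m) (g : SU2) :
    (∀ z₀ z₁ : ℂ, (conj (ga g) * z₀ + conj (gb g) * z₁) ^ k * (-(gb g) * z₀ + ga g * z₁) ^ m
        = z₀ ^ k * z₁ ^ m)
      ↔ gb g = 0 ∧ ga g ^ ((k : ℤ) - m).natAbs = 1 := by
  have diagonal_iff (hb : gb g = 0) :
      conj (ga g) ^ k * ga g ^ m = 1 ↔ ga g ^ ((k : ℤ) - m).natAbs = 1 := by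
    have norm_ga : ‖ga g‖ = 1 := by
      rw [← pow_eq_one_iff_of_nonneg (norm_nonneg _) two_ne_zero, ← normSq_eq_norm_sq]
      simpa only [hb, map_zero, add_zero] using normSq_add_normSq g
    rw [← inv_eq_conj norm_ga]
    exact inv_pow_mul_pow_eq_one_iff (norm_ne_zero_iff.mp (norm_ga ▸ one_ne_zero)) k m
  constructor
  · intro hfix
    have hb : gb g = 0 := by
      simpa using eq_zero_or_eq_zero_of_forall_pow_mul_pow_eq hkm hfix
    exact ⟨hb, (diagonal_iff hb).mp (by simpa [hb] using hfix 1 1)⟩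
  · rintro ⟨hb, hpow⟩ z₀ z₁
    simp only [hb, map_zero, neg_zero, zero_mul, zero_add, add_zero]
    linear_combination z₀ ^ k * z₁ ^ m * (diagonal_iff hb).mpr hpow

end SU2

namespace IsWigner

theorem column_eq_iff {n : ℕ} {D : Fin (n + 1) → Fin (n + 1) → SU2 → ℂ} (hD : IsWigner n D)
    (k : Fin (n + 1)) (g : SU2) (v : Fin (n + 1) → ℂ) :
    (∀ j, D j k g = v j) ↔ ∀ z₀ z₁ : ℂ,
      ∑ j : Fin (n + 1), (Real.sqrt (n.choose j) : ℂ) * z₀ ^ (j : ℕ) * z₁ ^ (n - (j : ℕ)) * v j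
        = (Real.sqrt (n.choose k) : ℂ) * (conj (ga g) * z₀ + conj (gb g) * z₁) ^ (k : ℕ)
          * (-(gb g) * z₀ + ga g * z₁) ^ (n - (k : ℕ)) := by
  constructor
  · intro hv z₀ z₁
    simpa only [hv] using hD g k z₀ z₁
  · intro hv j
    have coeff_eq : (fun i : Fin (n + 1) ↦ (Real.sqrt (n.choose i) : ℂ) * D i k g)
        = fun i : Fin (n + 1) ↦ (Real.sqrt (n.choose i) : ℂ) * v i :=
      eq_of_forall_sum_mul_pow_eq fun z ↦ by
        simpa [mul_right_comm] using (hD g k z 1).trans (hv z 1).symm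
    exact mul_left_cancel₀ (sqrt_choose_ne_zero j.is_le) (congrFun coeff_eq j)

theorem column_eq_single_iff {n : ℕ} {D : Fin (n + 1) → Fin (n + 1) → SU2 → ℂ} (hD : IsWigner n D)
    (k : Fin (n + 1)) (g : SU2) :
    (∀ j, D j k g = if j = k then 1 else 0) ↔ ∀ z₀ z₁ : ℂ,
      (conj (ga g) * z₀ + conj (gb g) * z₁) ^ (k : ℕ) * (-(gb g) * z₀ + ga g * z₁) ^ (n - (k : ℕ))
        = z₀ ^ (k : ℕ) * z₁ ^ (n - (k : ℕ)) := by
  rw [hD.column_eq_iff]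
  refine forall₂_congr fun z₀ z₁ ↦ ?_
  simp only [mul_ite, mul_one, mul_zero, Finset.sum_ite_eq', Finset.mem_univ, if_true, mul_assoc]
  rw [mul_right_inj' (sqrt_choose_ne_zero k.is_le), eq_comm]

end IsWigner

/-- stabilizer of a canonical basis vector `e_s` with `s ≠ 0` (i.e. column
index `k` with `2k ≠ n`): it is the set of diagonal matrices `h(α,0)` with `α^{2|s|} = 1`,
where `2|s| = |2k − n|`; in particular it has exactly `2|s|` elements. -/
theorem wigner_stabilizer_basis_vector (n : ℕ) (D : Fin (n + 1) → Fin (n + 1) → SU2 → ℂ)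
    (hD : IsWigner n D) (k : Fin (n + 1)) (hk : 2 * (k : ℕ) ≠ n) :
    {g : SU2 | ∀ j : Fin (n + 1), D j k g = if j = k then 1 else 0}
      = {g : SU2 | ∃ a : ℂ, a ^ (2 * (k : ℤ) - (n : ℤ)).natAbs = 1 ∧ g.1.1 = h a 0} ∧
    Nat.card {g : SU2 | ∀ j : Fin (n + 1), D j k g = if j = k then 1 else 0}
      = (2 * (k : ℤ) - (n : ℤ)).natAbs := by
  have index_eq : 2 * (k : ℤ) - n = (k : ℤ) - (n - (k : ℕ) : ℕ) := by omega
  have stabilizer_eq : {g : SU2 | ∀ j : Fin (n + 1), D j k g = if j = k then 1 else 0}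
      = {g : SU2 | ∃ a : ℂ, a ^ (2 * (k : ℤ) - (n : ℤ)).natAbs = 1 ∧ g.1.1 = h a 0} := by
    ext g
    rw [Set.mem_ofPred_eq, Set.mem_ofPred_eq, SU2.exists_pow_eq_one_and_coe_eq_h_zero_iff,
      hD.column_eq_single_iff, SU2.forall_pow_mul_pow_eq_iff (by omega), index_eq]
  exact ⟨stabilizer_eq, stabilizer_eq ▸ SU2.card_diagonal_pow_eq_one (by omega)⟩
end
end
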